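/- Let 0 ≤ r ≤ n, let a = (a_1,…,a_r) be a sequence of nonnegative integers, set k = n−r and s = a_1+⋯+a_r+k(k−1)/2. Let W_n(a)_{i,j} denote the bihomogeneous component of W_n(a) of x-degree i and θ-degree j. Then for any 0 ≤ i ≤ s and 0 ≤ j ≤ r, the bilinear pairing W_n(a)_{i,j} × W_n(a)_{s−i,r−j} → ℚ sending (f,g) to the constant ∂(fg)(Δ_n(a)) is a perfect pairing (nondegenerate in each argument); in particular dim W_n(a)_{i,j} = dim W_n(a)_{s−i,r−j}, and the top component W_n(a)_{s,r} is one-dimensional. -/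

import Mathlib

open MvPolynomial

/-- Superspace of rank `n`: elements are represented by their coefficients on the
basis of `θ`-monomials `θ_S` (for `S` a subset of `Fin n`, with factors in increasing order),
with coefficients in the polynomial ring `ℚ[x_1, …, x_n]`. -/
abbrev Superspace (n : ℕ) := Finset (Fin n) → MvPolynomial (Fin n) ℚ

/-- The partial derivative `∂_i` with respect to the commuting variable `x_i`,
treating the `θ`-variables as constants. -/
noncomputable def xDeriv {n : ℕ} (i : Fin n) (F : Superspace n) : Superspace n :=
  fun S => MvPolynomial.pderiv i (F S)

/-- The partial derivative `∂_i^θ` with respect to the anticommuting variable `θ_i`: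
it is `ℚ[x]`-linear and sends `θ_{j_1} ⋯ θ_{j_r}` (with `j_1 < ⋯ < j_r`) to
`(-1)^{s-1} θ_{j_1} ⋯ ω(θ_{j_s}) ⋯ θ_{j_r}` if `j_s = i`, and to `0` if `i` does not occur. -/
noncomputable def thetaDeriv {n : ℕ} (i : Fin n) (F : Superspace n) : Superspace n :=
  fun S => if i ∈ S then 0
    else ((-1 : ℚ) ^ (S.filter (fun j => j < i)).card) • F (insert i S)

/-- The differential operator `∂(p)` (replace each `x_i` in `p` by `∂_i`) applied to `q`. -/
noncomputable def diffOp {n : ℕ} (p q : MvPolynomial (Fin n) ℚ) : MvPolynomial (Fin n) ℚ :=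
  ∑ a ∈ p.support, ∑ b ∈ q.support,
    (p.coeff a * q.coeff b * ∏ i : Fin n, ((b i).descFactorial (a i) : ℚ)) •
      MvPolynomial.monomial (b - a) (1 : ℚ)

/-- The action of the polynomial ring `ℚ[x_1, …, x_n]` on superspace, `f · g := ∂(f)(g)`. -/
noncomputable def pAct {n : ℕ} (p : MvPolynomial (Fin n) ℚ) (F : Superspace n) : Superspace n :=
  fun S => diffOp p (F S)

/-- Iterated `θ`-derivative along a list (leftmost applied last). -/
noncomputable def thetaDerivList {n : ℕ} (l : List (Fin n)) (F : Superspace n) : Superspace n :=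
  l.foldr thetaDeriv F

/-- The action of superspace on itself, `f · g := ∂(f)(g)`, where `∂(f)` is obtained
from `f` by replacing every `x_i` by `∂_i` and every `θ_i` by `∂_i^θ`. -/
noncomputable def superAct {n : ℕ} (f g : Superspace n) : Superspace n :=
  ∑ T : Finset (Fin n), (fun S => diffOp (f T) (thetaDerivList (T.sort (· ≤ ·)) g S))

/-- The diagonal action of a permutation `w` on superspace:
`w · x_i = x_{w(i)}` and `w · θ_i = θ_{w(i)}`. -/
noncomputable def permAct {n : ℕ} (w : Equiv.Perm (Fin n)) (F : Superspace n) : Superspace n :=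
  fun S =>
    ((-1 : ℚ) ^ (((S.image w.symm) ×ˢ (S.image w.symm)).filter
        (fun p => p.1 < p.2 ∧ w p.2 < w p.1)).card) •
      MvPolynomial.rename w (F (S.image w.symm))

/-- The supermonomial `x^a · θ_T`. -/
noncomputable def sMono {n : ℕ} (a : Fin n →₀ ℕ) (T : Finset (Fin n)) : Superspace n :=
  fun S => if S = T then MvPolynomial.monomial a (1 : ℚ) else 0

/-- The `a`-superspace Vandermonde
`Δ_n(a) = ε_n · (x_1^{a_1} ⋯ x_r^{a_r} x_{r+1}^{k-1} ⋯ x_n^0 · θ_1 ⋯ θ_r)` (with `n = k + r`). -/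
noncomputable def superVandermonde (n r : ℕ) (a : Fin r → ℕ) : Superspace n :=
  ∑ w : Equiv.Perm (Fin n),
    ((Equiv.Perm.sign w : ℤ) : ℚ) •
      permAct w (sMono
        (Finsupp.equivFunOnFinite.symm
          (fun i : Fin n => if h : (i : ℕ) < r then a ⟨(i : ℕ), h⟩ else n - 1 - (i : ℕ)))
        (Finset.univ.filter (fun i : Fin n => (i : ℕ) < r)))

/-- Multiplication in superspace (the `θ`-variables anticommute). -/
noncomputable def superMul {n : ℕ} (F G : Superspace n) : Superspace n :=
  fun S => ∑ T ∈ S.powerset,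
    ((-1 : ℚ) ^ ((T ×ˢ (S \ T)).filter (fun p => p.2 < p.1)).card) • (F T * G (S \ T))

/-- The bilinear form `⟨f, g⟩` = constant term of `∂(f)(g)`. -/
noncomputable def superPairing {n : ℕ} (f g : Superspace n) : ℚ :=
  MvPolynomial.constantCoeff (superAct f g ∅)

/-- `V_n(a)`: the smallest subspace of superspace containing `Δ_n(a)` which is closed
under the partial derivatives `∂_1, …, ∂_n`. -/
noncomputable def Vspace (n r : ℕ) (a : Fin r → ℕ) : Submodule ℚ (Superspace n) :=
  sInf {W : Submodule ℚ (Superspace n) |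
    superVandermonde n r a ∈ W ∧ ∀ i : Fin n, ∀ F ∈ W, xDeriv i F ∈ W}

/-- `W_n(a)`: the smallest subspace of superspace containing `Δ_n(a)` which is closed
under `∂_1, …, ∂_n` and `∂_1^θ, …, ∂_n^θ`. -/
noncomputable def Wspace (n r : ℕ) (a : Fin r → ℕ) : Submodule ℚ (Superspace n) :=
  sInf {W : Submodule ℚ (Superspace n) |
    superVandermonde n r a ∈ W ∧ (∀ i : Fin n, ∀ F ∈ W, xDeriv i F ∈ W) ∧
      (∀ i : Fin n, ∀ F ∈ W, thetaDeriv i F ∈ W)}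

/-- A superpolynomial is `θ`-homogeneous of `θ`-degree `r`. -/
def isThetaHomog {n : ℕ} (r : ℕ) (F : Superspace n) : Prop :=
  ∀ S : Finset (Fin n), S.card ≠ r → F S = 0

/-- An `(n,k,s)`-staircase: a shuffle of `(s-1, …, s-1)` (`n-k` copies) with
`(k-1, k-2, …, 1, 0)`; `T` records the positions of the decreasing staircase part. -/
def isStaircase3 (n k s : ℕ) (b : Fin n → ℕ) : Prop :=
  ∃ T : Finset (Fin n), T.card = k ∧
    ∀ i : Fin n, b i = if i ∈ T then k - 1 - (T.filter (fun j => j < i)).card else s - 1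

/-- `(n,k,s)`-substaircase sequences: componentwise `≤` at least one `(n,k,s)`-staircase. -/
def isSubstaircase3 (n k s : ℕ) (c : Fin n → ℕ) : Prop :=
  ∃ b : Fin n → ℕ, isStaircase3 n k s b ∧ ∀ i, c i ≤ b i

/-- The (signless) Stirling numbers of the second kind. -/
def stirling2 : ℕ → ℕ → ℕ
  | 0, 0 => 1
  | 0, _ + 1 => 0
  | _ + 1, 0 => 0
  | n + 1, k + 1 => stirling2 n k + (k + 1) * stirling2 n (k + 1)

/-- The ideal `I_{n,k,s} = ⟨x_1^s, …, x_n^s, e_n, e_{n-1}, …, e_{n-k+1}⟩`. -/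
noncomputable def Inks (n k s : ℕ) : Ideal (MvPolynomial (Fin n) ℚ) :=
  Ideal.span ((Set.range fun i : Fin n => (MvPolynomial.X i : MvPolynomial (Fin n) ℚ) ^ s) ∪
    ((fun d => MvPolynomial.esymm (Fin n) ℚ d) '' {d : ℕ | n - k < d ∧ d ≤ n}))

/-- The `q`-number `[m]_q = 1 + q + ⋯ + q^{m-1}`. -/
noncomputable def qNum (m : ℕ) : Polynomial ℕ := ∑ i ∈ Finset.range m, Polynomial.X ^ i

/-- The `q`-factorial `[k]!_q`. -/
noncomputable def qFactorial : ℕ → Polynomial ℕ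
  | 0 => 1
  | m + 1 => qNum (m + 1) * qFactorial m

/-- The `q`-Stirling numbers `Stir_q(n,k)`. -/
noncomputable def qStirling : ℕ → ℕ → Polynomial ℕ
  | 0, 0 => 1
  | 0, _ + 1 => 0
  | _ + 1, 0 => 0
  | n + 1, k + 1 => qStirling n k + qNum (k + 1) * qStirling n (k + 1)

/-- The submodule of superspace of `x`-homogeneous elements of `x`-degree `d`. -/
noncomputable def xHomogSub (n d : ℕ) : Submodule ℚ (Superspace n) :=
  Submodule.pi Set.univ
    (fun _ : Finset (Fin n) => MvPolynomial.homogeneousSubmodule (Fin n) ℚ d)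

/-- The submodule of superspace of `θ`-homogeneous elements of `θ`-degree `j`. -/
noncomputable def thetaHomogSub (n j : ℕ) : Submodule ℚ (Superspace n) where
  carrier := {F | ∀ S : Finset (Fin n), S.card ≠ j → F S = 0}
  add_mem' := by
    intro F G hF hG S hS
    show F S + G S = 0
    rw [hF S hS, hG S hS, add_zero]
  zero_mem' := by intro S _; rfl
  smul_mem' := by
    intro c F hF S hS
    show c • F S = 0
    rw [hF S hS, smul_zero]

/-- The bidegree `(i,j)` component of `W_n(a)`. -/
noncomputable def Wcomp (n r : ℕ) (a : Fin r → ℕ) (i j : ℕ) : Submodule ℚ (Superspace n) :=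
  Wspace n r a ⊓ xHomogSub n i ⊓ thetaHomogSub n j

/-- The duality pairing `(f, g) ↦ ∂(fg)(Δ_n(a))` (a constant, recorded as a rational). -/
noncomputable def dualityPairing (n r : ℕ) (a : Fin r → ℕ) (f g : Superspace n) : ℚ :=
  MvPolynomial.constantCoeff (superAct (superMul f g) (superVandermonde n r a) ∅)

/-!
Let `W` be the closure of a bihomogeneous `Δ` under all `∂_i` and `∂_i^θ`. As
`∂(fg) = ∂(f) ∘ ∂(g)`, the pairing is `(f, g) ↦ ⟨f, g · Δ⟩`, where `⟨p, q⟩` is the constant term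
of `∂(p)(q)`. Two facts drive everything: on each `θ`-degree `⟨f, f⟩` is, up to sign, a positive
definite form, and homogeneous elements act commutatively up to sign. If `f ∈ W` is
`θ`-homogeneous and kills `Δ`, it therefore kills all of `W`, hence itself, so `f = 0`. Thus
`f ↦ f · Δ` embeds `W_{i,j}` into `W_{s-i,r-j}`, which gives both equality of dimensions and
nondegeneracy, the partner of `f` being `f · Δ`. For the superspace Vandermonde it remains to see
that `Δ ≠ 0`: in its defining alternating sum the coefficient of `x^e θ_T` for the starting
supermonomial counts the permutations stabilizing `(e, T)`, since each of them contributes `+1`.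
-/

section PartialAction

variable (σ R : Type*) [Fintype σ] [CommSemiring R]

/-- The action of polynomials on polynomials by constant-coefficient differential operators
(`X i` acts as `∂/∂x_i`), as a bilinear map; see `diffHom` for the algebra homomorphism. The
falling factorials vanish unless `a ≤ b`, so the truncated subtraction `b - a` is harmless. -/
noncomputable def diffBilin : MvPolynomial σ R →ₗ[R] MvPolynomial σ R →ₗ[R] MvPolynomial σ R :=
  (basisMonomials σ R).constr R fun a => (basisMonomials σ R).constr R fun b =>
    monomial (b - a) (∏ i, ((b i).descFactorial (a i) : R))

variable {σ R}

theorem diffBilin_apply (p q : MvPolynomial σ R) :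
    diffBilin σ R p q = ∑ a ∈ p.support, ∑ b ∈ q.support,
      (p.coeff a * q.coeff b) • monomial (b - a) (∏ i, ((b i).descFactorial (a i) : R)) := by
  simp only [diffBilin, Module.Basis.constr_apply, Finsupp.sum, LinearMap.sum_apply,
    LinearMap.smul_apply, Finset.smul_sum, smul_smul]
  rfl

theorem diffBilin_monomial_one (a b : σ →₀ ℕ) :
    diffBilin σ R (monomial a 1) (monomial b 1) =
      monomial (b - a) (∏ i, ((b i).descFactorial (a i) : R)) := by
  have h (e : σ →₀ ℕ) : (monomial e 1 : MvPolynomial σ R) = basisMonomials σ R e := by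
    rw [coe_basisMonomials]
  rw [diffBilin, h a, h b, Module.Basis.constr_basis, Module.Basis.constr_basis]

theorem prod_descFactorial_add (a b u : σ →₀ ℕ) :
    ∏ i, (u i).descFactorial ((a + b) i) =
      (∏ i, (u i).descFactorial (b i)) * ∏ i, ((u - b) i).descFactorial (a i) := by
  rw [← Finset.prod_mul_distrib]
  refine Finset.prod_congr rfl fun i _ => ?_
  rw [Finsupp.add_apply, Finsupp.tsub_apply, mul_comm,
    ← Nat.descFactorial_mul_descFactorial (Nat.le_add_left (b i) (a i)), Nat.add_sub_cancel]

theorem diffBilin_mul (p q : MvPolynomial σ R) :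
    diffBilin σ R (p * q) = diffBilin σ R p * diffBilin σ R q := by
  revert p q
  rw [LinearMap.map_mul_iff]
  refine (basisMonomials σ R).ext fun a => (basisMonomials σ R).ext fun b =>
    (basisMonomials σ R).ext fun u => ?_
  have h : (monomial (u - b) (∏ i, ((u i).descFactorial (b i) : R))) =
      (∏ i, ((u i).descFactorial (b i) : R)) • monomial (u - b) 1 := by
    rw [smul_monomial, smul_eq_mul, mul_one]
  simp only [coe_basisMonomials, LinearMap.compr₂_apply, LinearMap.mul_apply', monomial_mul,
    mul_one, LinearMap.compl₂_apply, LinearMap.comp_apply, Module.End.mul_apply,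
    diffBilin_monomial_one]
  rw [h, map_smul, diffBilin_monomial_one, smul_monomial, smul_eq_mul, tsub_tsub, add_comm b]
  exact congrArg _ (by exact_mod_cast congrArg (Nat.cast (R := R)) (prod_descFactorial_add a b u))

theorem diffBilin_one : diffBilin σ R 1 = 1 := by
  refine (basisMonomials σ R).ext fun b => ?_
  rw [coe_basisMonomials, ← C_1, ← monomial_zero', diffBilin_monomial_one]
  simp only [Finsupp.coe_zero, Pi.zero_apply, Nat.descFactorial_zero, Nat.cast_one,
    Finset.prod_const_one, tsub_zero, Module.End.one_apply]

variable (σ R) in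
/-- The algebra homomorphism `p ↦ ∂(p)` sending a polynomial to the corresponding
constant-coefficient differential operator. -/
noncomputable def diffHom : MvPolynomial σ R →ₐ[R] Module.End R (MvPolynomial σ R) :=
  AlgHom.ofLinearMap (diffBilin σ R) diffBilin_one diffBilin_mul

theorem diffHom_apply (p q : MvPolynomial σ R) :
    diffHom σ R p q = ∑ a ∈ p.support, ∑ b ∈ q.support,
      (p.coeff a * q.coeff b) • monomial (b - a) (∏ i, ((b i).descFactorial (a i) : R)) :=
  diffBilin_apply p q

theorem diffHom_monomial_one (a b : σ →₀ ℕ) :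
    diffHom σ R (monomial a 1) (monomial b 1) =
      monomial (b - a) (∏ i, ((b i).descFactorial (a i) : R)) :=
  diffBilin_monomial_one a b

theorem diffHom_X (i : σ) : diffHom σ R (X i) = (pderiv i).toLinearMap := by
  classical
  refine (basisMonomials σ R).ext fun b => ?_
  rw [coe_basisMonomials, X, diffHom_monomial_one, Derivation.coeFn_coe, pderiv_monomial, one_mul]
  congr 1
  rw [Finset.prod_eq_single i (fun j _ hj => by simp [hj.symm]) (by simp)]
  simp

theorem prod_descFactorial_eq_zero {a b : σ →₀ ℕ} (hab : ¬a ≤ b) :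
    ∏ i, ((b i).descFactorial (a i) : R) = 0 := by
  obtain ⟨i, hi⟩ := not_forall.1 hab
  refine Finset.prod_eq_zero (Finset.mem_univ i) ?_
  rw [Nat.descFactorial_of_lt (not_le.1 hi), Nat.cast_zero]

theorem isHomogeneous_diffHom {p q : MvPolynomial σ R} {i s : ℕ} (hp : p.IsHomogeneous i)
    (hq : q.IsHomogeneous s) : (diffHom σ R p q).IsHomogeneous (s - i) := by
  rw [diffHom_apply]
  refine IsHomogeneous.sum _ _ _ fun a ha => IsHomogeneous.sum _ _ _ fun b hb => ?_
  by_cases hab : a ≤ b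
  · rw [smul_monomial]
    refine isHomogeneous_monomial _ ?_
    rw [← of_not_not (mt (hp.coeff_eq_zero (d := a)) (mem_support_iff.1 ha)),
      ← of_not_not (mt (hq.coeff_eq_zero (d := b)) (mem_support_iff.1 hb))]
    obtain ⟨c, rfl⟩ := le_iff_exists_add.1 hab
    rw [add_tsub_cancel_left, map_add, Nat.add_sub_cancel_left]
  · rw [prod_descFactorial_eq_zero hab, map_zero, smul_zero]
    exact isHomogeneous_zero _ _ _

theorem constantCoeff_diffHom (p q : MvPolynomial σ R) :
    constantCoeff (diffHom σ R p q) =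
      ∑ a ∈ p.support, p.coeff a * q.coeff a * ∏ i, ((a i).factorial : R) := by
  classical
  have hterm (a b : σ →₀ ℕ) :
      constantCoeff (monomial (b - a) (∏ i, ((b i).descFactorial (a i) : R))) =
        if b = a then ∏ i, ((a i).factorial : R) else 0 := by
    rw [constantCoeff_monomial]
    by_cases hab : a ≤ b
    · simp only [tsub_eq_zero_iff_le, hab.ge_iff_eq']
      split_ifs with h
      · simp only [h, Nat.descFactorial_self]
      · rfl
    · rw [prod_descFactorial_eq_zero hab, ite_self, if_neg (fun h => hab h.ge)]
  simp only [diffHom_apply, map_sum, constantCoeff_smul, hterm, smul_eq_mul, mul_ite, mul_zero,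
    Finset.sum_ite_eq']
  refine Finset.sum_congr rfl fun a _ => ite_eq_left_iff.2 fun ha => ?_
  rw [notMem_support_iff.1 ha, mul_zero, zero_mul]

end PartialAction

section Definiteness

variable {σ K : Type*} [Fintype σ] [CommRing K] [LinearOrder K] [IsStrictOrderedRing K]

theorem constantCoeff_diffHom_self_pos {p : MvPolynomial σ K} (hp : p ≠ 0) :
    0 < constantCoeff (diffHom σ K p p) := by
  rw [constantCoeff_diffHom]
  exact Finset.sum_pos (fun a ha => mul_pos (mul_self_pos.2 (mem_support_iff.1 ha))
    (Finset.prod_pos fun i _ => Nat.cast_pos.2 (a i).factorial_pos)) (support_nonempty.2 hp)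

theorem constantCoeff_diffHom_self_nonneg (p : MvPolynomial σ K) :
    0 ≤ constantCoeff (diffHom σ K p p) := by
  rcases eq_or_ne p 0 with rfl | hp
  · rw [map_zero, map_zero]
  · exact (constantCoeff_diffHom_self_pos hp).le

end Definiteness

theorem diffOp_eq_diffHom {n : ℕ} (p q : MvPolynomial (Fin n) ℚ) :
    diffOp p q = diffHom (Fin n) ℚ p q := by
  simp only [diffOp, diffHom_apply, smul_monomial, smul_eq_mul, mul_one]

section Signs

variable {α : Type*} [LinearOrder α]

/-- The sign of the shuffle sorting `θ_A θ_B` into increasing order, for disjoint `A` and `B`. -/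
def shuffleSign (A B : Finset α) : ℚ := ∏ a ∈ A, ∏ b ∈ B, if b < a then -1 else 1

/-- The sign of the permutation reversing `m` letters. It appears because
`∂_{i_1}^θ ⋯ ∂_{i_m}^θ` removes `θ_{i_m}` first. -/
def reversalSign (m : ℕ) : ℚ := (-1) ^ m.choose 2

theorem shuffleSign_eq_pow_card (A B : Finset α) :
    shuffleSign A B = (-1) ^ ((A ×ˢ B).filter fun p => p.2 < p.1).card := by
  rw [shuffleSign, ← Finset.prod_product', Finset.prod_ite, Finset.prod_const_one, mul_one,
    Finset.prod_const]

theorem shuffleSign_singleton_left (i : α) (B : Finset α) :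
    shuffleSign {i} B = (-1) ^ (B.filter (· < i)).card := by
  rw [shuffleSign, Finset.prod_singleton, Finset.prod_ite, Finset.prod_const_one, mul_one,
    Finset.prod_const]

theorem shuffleSign_empty_left (B : Finset α) : shuffleSign ∅ B = 1 := rfl

theorem shuffleSign_empty_right (A : Finset α) : shuffleSign A ∅ = 1 :=
  Finset.prod_const_one

theorem shuffleSign_union_left {A A' : Finset α} (h : Disjoint A A') (B : Finset α) :
    shuffleSign (A ∪ A') B = shuffleSign A B * shuffleSign A' B :=
  Finset.prod_union h

theorem shuffleSign_union_right {B B' : Finset α} (h : Disjoint B B') (A : Finset α) :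
    shuffleSign A (B ∪ B') = shuffleSign A B * shuffleSign A B' := by
  simp only [shuffleSign, Finset.prod_union h, Finset.prod_mul_distrib]

theorem shuffleSign_mul_self (A B : Finset α) : shuffleSign A B * shuffleSign A B = 1 := by
  rw [shuffleSign_eq_pow_card, ← mul_pow, neg_one_mul, neg_neg, one_pow]

theorem shuffleSign_mul_swap {A B : Finset α} (h : Disjoint A B) :
    shuffleSign A B * shuffleSign B A = (-1) ^ (A.card * B.card) := by
  have hne {a b : α} (ha : a ∈ A) (hb : b ∈ B) :
      (if b < a then (-1 : ℚ) else 1) * (if a < b then -1 else 1) = -1 := by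
    rcases lt_or_gt_of_ne (Finset.disjoint_iff_ne.1 h a ha b hb) with hab | hab <;>
      simp [hab, hab.not_gt]
  rw [shuffleSign, shuffleSign, Finset.prod_comm (s := B), ← Finset.prod_mul_distrib,
    mul_comm A.card, pow_mul, ← Finset.prod_const]
  refine Finset.prod_congr rfl fun a ha => ?_
  rw [← Finset.prod_mul_distrib, ← Finset.prod_const]
  exact Finset.prod_congr rfl fun b hb => hne ha hb

theorem shuffleSign_comm {A B : Finset α} (h : Disjoint A B) :
    shuffleSign A B = (-1) ^ (A.card * B.card) * shuffleSign B A := by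
  rw [← shuffleSign_mul_swap h, mul_assoc, shuffleSign_mul_self, mul_one]

theorem shuffleSign_singleton_right_of_forall_lt {a : α} {B : Finset α} (h : ∀ b ∈ B, a < b) :
    shuffleSign B {a} = (-1) ^ B.card := by
  simp only [shuffleSign, Finset.prod_singleton]
  rw [← Finset.prod_const]
  exact Finset.prod_congr rfl fun b hb => if_pos (h b hb)

theorem reversalSign_ne_zero (m : ℕ) : reversalSign m ≠ 0 :=
  pow_ne_zero _ (neg_ne_zero.2 one_ne_zero)

theorem reversalSign_succ (m : ℕ) : reversalSign (m + 1) = (-1) ^ m * reversalSign m := by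
  rw [reversalSign, Nat.choose_succ_succ' m 1, pow_add, Nat.choose_one_right, reversalSign]

theorem reversalSign_add (m k : ℕ) :
    reversalSign (m + k) = (-1) ^ (m * k) * reversalSign m * reversalSign k := by
  induction k with
  | zero => simp [reversalSign]
  | succ k ih =>
    rw [← add_assoc, reversalSign_succ, reversalSign_succ, ih, mul_add, pow_add, pow_add]
    ring

end Signs

theorem sum_powerset_powerset_sdiff {α M : Type*} [DecidableEq α] [AddCommMonoid M]
    (A : Finset α) (F : Finset α → Finset α → M) :
    ∑ U ∈ A.powerset, ∑ T ∈ U.powerset, F T (U \ T) =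
      ∑ T ∈ A.powerset, ∑ T' ∈ (A \ T).powerset, F T T' := by
  rw [Finset.sum_sigma', Finset.sum_sigma']
  refine Finset.sum_bij' (fun x _ => ⟨x.2, x.1 \ x.2⟩) (fun x _ => ⟨x.1 ∪ x.2, x.1⟩)
    ?_ ?_ ?_ ?_ (fun _ _ => rfl)
  all_goals
    rintro ⟨U, T⟩ h
    simp only [Finset.mem_sigma, Finset.mem_powerset, Finset.subset_sdiff] at h ⊢
  · exact ⟨h.2.trans h.1, Finset.sdiff_subset.trans h.1, Finset.sdiff_disjoint⟩
  · exact ⟨Finset.union_subset h.1 h.2.1, Finset.subset_union_left⟩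
  · rw [Finset.union_sdiff_of_subset h.2]
  · rw [Finset.union_sdiff_cancel_left h.2.2.symm]

section SuperAction

variable {n : ℕ}

theorem superMul_apply (f g : Superspace n) (S : Finset (Fin n)) :
    superMul f g S = ∑ T ∈ S.powerset, shuffleSign T (S \ T) • (f T * g (S \ T)) := by
  simp only [superMul, shuffleSign_eq_pow_card]

theorem thetaDeriv_apply (i : Fin n) (F : Superspace n) (S : Finset (Fin n)) :
    thetaDeriv i F S = if i ∈ S then 0 else shuffleSign {i} S • F (insert i S) := by
  rw [shuffleSign_singleton_left, thetaDeriv]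

theorem thetaDerivList_sort_apply (T : Finset (Fin n)) (G : Superspace n) (S : Finset (Fin n)) :
    thetaDerivList (T.sort (· ≤ ·)) G S =
      if T ⊆ Sᶜ then (reversalSign T.card * shuffleSign T S) • G (S ∪ T) else 0 := by
  induction T using Finset.induction_on_min generalizing S with
  | empty => simp [thetaDerivList, reversalSign, shuffleSign_empty_left]
  | insert a T ha ih =>
    have haT : a ∉ T := fun h => lt_irrefl _ (ha a h)
    have hT : Disjoint {a} T := Finset.disjoint_singleton_left.2 haT
    rw [Finset.sort_insert (· ≤ ·) (fun b hb => (ha b hb).le) haT, thetaDerivList,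
      List.foldr_cons, ← thetaDerivList, thetaDeriv_apply, ih, Finset.insert_union,
      ← Finset.union_insert]
    simp only [Finset.insert_subset_iff, Finset.mem_compl]
    have hsub : T ⊆ (insert a S)ᶜ ↔ T ⊆ Sᶜ := by
      rw [Finset.compl_insert, Finset.subset_erase, and_iff_left haT]
    by_cases haS : a ∈ S
    · rw [if_pos haS, if_neg (fun h => h.1 haS)]
    · simp only [haS, if_false, hsub, not_false_iff, true_and, smul_ite, smul_zero, smul_smul]
      have hS : Disjoint {a} S := Finset.disjoint_singleton_left.2 haS
      congr 2
      rw [Finset.card_insert_of_notMem haT, reversalSign_succ, Finset.insert_eq, Finset.insert_eq,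
        shuffleSign_union_left hT, shuffleSign_union_right hS,
        shuffleSign_singleton_right_of_forall_lt ha]
      ring

theorem superAct_apply (f g : Superspace n) (S : Finset (Fin n)) :
    superAct f g S = ∑ T ∈ Sᶜ.powerset,
      (reversalSign T.card * shuffleSign T S) • diffHom (Fin n) ℚ (f T) (g (S ∪ T)) := by
  simp only [superAct, Finset.sum_apply, diffOp_eq_diffHom, thetaDerivList_sort_apply,
    apply_ite (diffHom (Fin n) ℚ _), map_smul, map_zero, ← Finset.mem_powerset]
  rw [← Finset.sum_filter, Finset.filter_univ_mem]

variable (n) in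
/-- `superAct` as a bilinear map. -/
noncomputable def superActBilin : Superspace n →ₗ[ℚ] Superspace n →ₗ[ℚ] Superspace n :=
  LinearMap.mk₂ ℚ superAct
    (fun f f' g => funext fun S => by
      simp only [superAct_apply, Pi.add_apply, map_add, LinearMap.add_apply, smul_add,
        Finset.sum_add_distrib])
    (fun c f g => funext fun S => by
      simp only [superAct_apply, Pi.smul_apply, map_smul, LinearMap.smul_apply, Finset.smul_sum,
        smul_comm c])
    (fun f g g' => funext fun S => by
      simp only [superAct_apply, Pi.add_apply, map_add, smul_add, Finset.sum_add_distrib])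
    (fun c f g => funext fun S => by
      simp only [superAct_apply, Pi.smul_apply, map_smul, Finset.smul_sum, smul_comm c])

theorem superActBilin_apply (f g : Superspace n) : superActBilin n f g = superAct f g := rfl

theorem reversalSign_mul_shuffleSign_union {S T T' : Finset (Fin n)} (hTT' : Disjoint T T')
    (hST : Disjoint S T) :
    reversalSign (T ∪ T').card * shuffleSign (T ∪ T') S * shuffleSign T T' =
      reversalSign T.card * shuffleSign T S *
        (reversalSign T'.card * shuffleSign T' (S ∪ T)) := by
  rw [Finset.card_union_of_disjoint hTT', reversalSign_add, shuffleSign_union_left hTT',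
    shuffleSign_union_right hST, shuffleSign_comm hTT'.symm, mul_comm T'.card]
  ring

theorem superAct_superMul (f g h : Superspace n) :
    superAct (superMul f g) h = superAct f (superAct g h) := by
  funext S
  let F (T T' : Finset (Fin n)) : MvPolynomial (Fin n) ℚ :=
    (reversalSign (T ∪ T').card * shuffleSign (T ∪ T') S * shuffleSign T T') •
      diffHom (Fin n) ℚ (f T) (diffHom (Fin n) ℚ (g T') (h (S ∪ (T ∪ T'))))
  calc superAct (superMul f g) h S
      = ∑ U ∈ Sᶜ.powerset, ∑ T ∈ U.powerset, F T (U \ T) := by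
        rw [superAct_apply]
        refine Finset.sum_congr rfl fun U _ => ?_
        rw [superMul_apply, map_sum, LinearMap.sum_apply, Finset.smul_sum]
        refine Finset.sum_congr rfl fun T hT => ?_
        rw [map_smul, map_mul, LinearMap.smul_apply, Module.End.mul_apply, smul_smul]
        simp only [F, Finset.union_sdiff_of_subset (Finset.mem_powerset.1 hT)]
    _ = ∑ T ∈ Sᶜ.powerset, ∑ T' ∈ (Sᶜ \ T).powerset, F T T' :=
        sum_powerset_powerset_sdiff _ F
    _ = superAct f (superAct g h) S := by
        rw [superAct_apply]
        refine Finset.sum_congr rfl fun T hT => ?_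
        rw [superAct_apply, map_sum, Finset.smul_sum, Finset.compl_union,
          ← Finset.sdiff_eq_inter_compl]
        refine Finset.sum_congr rfl fun T' hT' => ?_
        simp only [Finset.mem_powerset, Finset.subset_sdiff] at hT'
        have hST : Disjoint S T :=
          Finset.subset_compl_iff_disjoint_left.1 (Finset.mem_powerset.1 hT)
        rw [map_smul, smul_smul, Finset.union_assoc,
          ← reversalSign_mul_shuffleSign_union hT'.2.symm hST]

theorem superMul_comm_of_mem_thetaHomogSub {j m : ℕ} {f g : Superspace n}
    (hf : f ∈ thetaHomogSub n j) (hg : g ∈ thetaHomogSub n m) :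
    superMul f g = (-1 : ℚ) ^ (j * m) • superMul g f := by
  funext S
  rw [Pi.smul_apply, superMul_apply, superMul_apply, Finset.smul_sum]
  refine Finset.sum_bij' (fun T _ => S \ T) (fun T _ => S \ T)
    (fun T _ => Finset.mem_powerset.2 Finset.sdiff_subset)
    (fun T _ => Finset.mem_powerset.2 Finset.sdiff_subset)
    (fun T hT => Finset.sdiff_sdiff_eq_self (Finset.mem_powerset.1 hT))
    (fun T hT => Finset.sdiff_sdiff_eq_self (Finset.mem_powerset.1 hT)) fun T hT => ?_
  rw [Finset.sdiff_sdiff_eq_self (Finset.mem_powerset.1 hT), mul_comm (g _)]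
  by_cases hTj : T.card = j
  · by_cases hTm : (S \ T).card = m
    · rw [smul_smul, shuffleSign_comm Finset.disjoint_sdiff, hTj, hTm]
    · rw [hg _ hTm, mul_zero, smul_zero, smul_zero, smul_zero]
  · rw [hf _ hTj, zero_mul, smul_zero, smul_zero, smul_zero]

theorem superAct_left_comm {j m : ℕ} {f g : Superspace n}
    (hf : f ∈ thetaHomogSub n j) (hg : g ∈ thetaHomogSub n m) (h : Superspace n) :
    superAct f (superAct g h) = (-1 : ℚ) ^ (j * m) • superAct g (superAct f h) := by
  rw [← superAct_superMul, superMul_comm_of_mem_thetaHomogSub hf hg, ← superActBilin_apply,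
    map_smul, LinearMap.smul_apply, superActBilin_apply, superAct_superMul]

theorem sMono_mem_thetaHomogSub (e : Fin n →₀ ℕ) (T : Finset (Fin n)) :
    sMono e T ∈ thetaHomogSub n T.card :=
  fun _ hS => if_neg fun h => hS (congrArg Finset.card h)

theorem sMono_mem_xHomogSub (e : Fin n →₀ ℕ) (T : Finset (Fin n)) :
    sMono e T ∈ xHomogSub n e.degree := by
  intro S _
  simp only [sMono]
  split_ifs
  · exact isHomogeneous_monomial _ rfl
  · exact Submodule.zero_mem _

theorem superAct_sMono (e : Fin n →₀ ℕ) (T : Finset (Fin n)) (G : Superspace n) :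
    superAct (sMono e T) G = pAct (monomial e 1) (thetaDerivList (T.sort (· ≤ ·)) G) := by
  funext S
  rw [superAct, Finset.sum_apply, Finset.sum_eq_single T]
  · rw [sMono, if_pos rfl, pAct]
  · intro U _ hU
    rw [sMono, if_neg hU, diffOp_eq_diffHom, map_zero, LinearMap.zero_apply]
  · exact fun hT => absurd (Finset.mem_univ T) hT

theorem superAct_sMono_single_empty (i : Fin n) (G : Superspace n) :
    superAct (sMono (Finsupp.single i 1) ∅) G = xDeriv i G := by
  funext S
  rw [superAct_sMono, Finset.sort_empty, thetaDerivList, List.foldr_nil, pAct, xDeriv,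
    diffOp_eq_diffHom, ← X, diffHom_X, Derivation.coeFn_coe]

theorem superAct_sMono_zero_singleton (i : Fin n) (G : Superspace n) :
    superAct (sMono 0 {i}) G = thetaDeriv i G := by
  funext S
  rw [superAct_sMono, Finset.sort_singleton, thetaDerivList, List.foldr_cons, List.foldr_nil, pAct,
    diffOp_eq_diffHom, monomial_zero', C_1, map_one, Module.End.one_apply]

theorem superAct_mem_thetaHomogSub {i r : ℕ} {f G : Superspace n} (hi : i ≤ r)
    (hf : f ∈ thetaHomogSub n i) (hG : G ∈ thetaHomogSub n r) :
    superAct f G ∈ thetaHomogSub n (r - i) := by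
  intro S hS
  rw [superAct_apply]
  refine Finset.sum_eq_zero fun T hT => ?_
  have hST : Disjoint S T := Finset.subset_compl_iff_disjoint_left.1 (Finset.mem_powerset.1 hT)
  by_cases hTi : T.card = i
  · rw [hG (S ∪ T) (by rw [Finset.card_union_of_disjoint hST]; lia), map_zero, smul_zero]
  · rw [hf T hTi, map_zero, LinearMap.zero_apply, smul_zero]

theorem superAct_mem_xHomogSub {i s : ℕ} {f G : Superspace n}
    (hf : f ∈ xHomogSub n i) (hG : G ∈ xHomogSub n s) :
    superAct f G ∈ xHomogSub n (s - i) := by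
  intro S _
  rw [superAct_apply]
  exact Submodule.sum_mem _ fun T _ => Submodule.smul_mem _ _
    (isHomogeneous_diffHom (hf T trivial) (hG _ trivial))

theorem superPairing_self_ne_zero {j : ℕ} {f : Superspace n} (hf : f ∈ thetaHomogSub n j)
    (hf0 : f ≠ 0) : superPairing f f ≠ 0 := by
  have hsum : superPairing f f =
      reversalSign j * ∑ T, constantCoeff (diffHom (Fin n) ℚ (f T) (f T)) := by
    rw [superPairing, superAct_apply, map_sum, Finset.mul_sum, Finset.compl_empty,
      Finset.powerset_univ]
    refine Finset.sum_congr rfl fun T _ => ?_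
    rw [shuffleSign_empty_right, mul_one, Finset.empty_union, constantCoeff_smul, smul_eq_mul]
    by_cases hT : T.card = j
    · rw [hT]
    · rw [hf T hT, map_zero, map_zero, mul_zero, mul_zero]
  obtain ⟨T, hT⟩ := Function.ne_iff.1 hf0
  rw [hsum]
  exact mul_ne_zero (reversalSign_ne_zero j) (Finset.sum_pos'
    (fun _ _ => constantCoeff_diffHom_self_nonneg _)
    ⟨T, Finset.mem_univ T, constantCoeff_diffHom_self_pos hT⟩).ne'

end SuperAction

section DerivClosure

variable {n : ℕ}

/-- The smallest subspace of superspace containing `Δ` and closed under all `∂_i` and `∂_i^θ`;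
`Wspace n r a` is the case `Δ = superVandermonde n r a`. -/
noncomputable def derivClosure (Δ : Superspace n) : Submodule ℚ (Superspace n) :=
  sInf {W : Submodule ℚ (Superspace n) |
    Δ ∈ W ∧ (∀ i : Fin n, ∀ F ∈ W, xDeriv i F ∈ W) ∧ (∀ i : Fin n, ∀ F ∈ W, thetaDeriv i F ∈ W)}

/-- The bidegree `(i, j)` component of `derivClosure Δ`. -/
noncomputable def derivClosureComp (Δ : Superspace n) (i j : ℕ) : Submodule ℚ (Superspace n) :=
  derivClosure Δ ⊓ xHomogSub n i ⊓ thetaHomogSub n j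

variable {Δ F f : Superspace n} {i j r s : ℕ}

theorem derivClosure_le {W : Submodule ℚ (Superspace n)} (hΔ : Δ ∈ W)
    (hx : ∀ i : Fin n, ∀ F ∈ W, xDeriv i F ∈ W) (hθ : ∀ i : Fin n, ∀ F ∈ W, thetaDeriv i F ∈ W) :
    derivClosure Δ ≤ W :=
  sInf_le ⟨hΔ, hx, hθ⟩

theorem self_mem_derivClosure (Δ : Superspace n) : Δ ∈ derivClosure Δ :=
  Submodule.mem_sInf.2 fun _ hW => hW.1

theorem xDeriv_mem_derivClosure (i : Fin n) (hF : F ∈ derivClosure Δ) :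
    xDeriv i F ∈ derivClosure Δ :=
  Submodule.mem_sInf.2 fun W hW => hW.2.1 i F (Submodule.mem_sInf.1 hF W hW)

theorem thetaDeriv_mem_derivClosure (i : Fin n) (hF : F ∈ derivClosure Δ) :
    thetaDeriv i F ∈ derivClosure Δ :=
  Submodule.mem_sInf.2 fun W hW => hW.2.2 i F (Submodule.mem_sInf.1 hF W hW)

theorem thetaDerivList_mem_derivClosure (l : List (Fin n)) (hF : F ∈ derivClosure Δ) :
    thetaDerivList l F ∈ derivClosure Δ := by
  induction l with
  | nil => exact hF
  | cons i l ih => exact thetaDeriv_mem_derivClosure i ih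

theorem pAct_mem_derivClosure (p : MvPolynomial (Fin n) ℚ) (hF : F ∈ derivClosure Δ) :
    pAct p F ∈ derivClosure Δ := by
  have hpAct (p : MvPolynomial (Fin n) ℚ) (F : Superspace n) :
      pAct p F = fun S => diffHom (Fin n) ℚ p (F S) := funext fun S => diffOp_eq_diffHom p (F S)
  rw [hpAct]
  induction p using MvPolynomial.induction_on generalizing F with
  | C c =>
    simp only [← algebraMap_eq, AlgHom.commutes, Module.algebraMap_end_apply]
    exact Submodule.smul_mem _ c hF
  | add p q hp hq =>
    simp only [map_add, LinearMap.add_apply]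
    exact Submodule.add_mem _ (hp hF) (hq hF)
  | mul_X p i hp =>
    simp only [map_mul, diffHom_X, Module.End.mul_apply]
    exact hp (xDeriv_mem_derivClosure i hF)

theorem superAct_mem_derivClosure (f : Superspace n) (hF : F ∈ derivClosure Δ) :
    superAct f F ∈ derivClosure Δ :=
  Submodule.sum_mem _ fun T _ =>
    pAct_mem_derivClosure (f T) (thetaDerivList_mem_derivClosure (T.sort (· ≤ ·)) hF)

-- The annihilated elements form a subspace closed under `∂_i` and `∂_i^θ`, because `f` commutes
-- up to sign with the action of every `x_i` and `θ_i`.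
theorem superAct_eq_zero_of_mem_derivClosure (hf : f ∈ thetaHomogSub n j)
    (hfΔ : superAct f Δ = 0) (hF : F ∈ derivClosure Δ) : superAct f F = 0 := by
  have hcomm {g : Superspace n} {m : ℕ} (hg : g ∈ thetaHomogSub n m) {G : Superspace n}
      (hG : superAct f G = 0) : superAct f (superAct g G) = 0 := by
    rw [superAct_left_comm hf hg, hG, ← superActBilin_apply, map_zero, smul_zero]
  have hker : derivClosure Δ ≤ LinearMap.ker (superActBilin n f) := by
    refine derivClosure_le hfΔ (fun i G hG => ?_) (fun i G hG => ?_)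
    · rw [← superAct_sMono_single_empty]
      exact hcomm (sMono_mem_thetaHomogSub _ _) hG
    · rw [← superAct_sMono_zero_singleton]
      exact hcomm (sMono_mem_thetaHomogSub _ _) hG
  exact hker hF

theorem eq_zero_of_superAct_eq_zero (hf : f ∈ derivClosure Δ) (hfθ : f ∈ thetaHomogSub n j)
    (hfΔ : superAct f Δ = 0) : f = 0 := by
  by_contra hf0
  refine superPairing_self_ne_zero hfθ hf0 ?_
  rw [superPairing, superAct_eq_zero_of_mem_derivClosure hfθ hfΔ hf, Pi.zero_apply, map_zero]

theorem superAct_mem_derivClosureComp (hΔx : Δ ∈ xHomogSub n s) (hΔθ : Δ ∈ thetaHomogSub n r)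
    (hj : j ≤ r) (hf : f ∈ derivClosureComp Δ i j) :
    superAct f Δ ∈ derivClosureComp Δ (s - i) (r - j) :=
  ⟨⟨superAct_mem_derivClosure f (self_mem_derivClosure Δ), superAct_mem_xHomogSub hf.1.2 hΔx⟩,
    superAct_mem_thetaHomogSub hj hf.2 hΔθ⟩

theorem exists_superPairing_superMul_right_ne_zero (hΔx : Δ ∈ xHomogSub n s)
    (hΔθ : Δ ∈ thetaHomogSub n r) (hj : j ≤ r) (hf : f ∈ derivClosureComp Δ i j) (hf0 : f ≠ 0) :
    ∃ g ∈ derivClosureComp Δ (s - i) (r - j), superPairing (superMul f g) Δ ≠ 0 := by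
  have hg := superAct_mem_derivClosureComp hΔx hΔθ hj hf
  refine ⟨superAct f Δ, hg, ?_⟩
  rw [superPairing, superMul_comm_of_mem_thetaHomogSub hf.2 hg.2, ← superActBilin_apply, map_smul,
    LinearMap.smul_apply, superActBilin_apply, superAct_superMul, Pi.smul_apply, constantCoeff_smul]
  exact smul_ne_zero (pow_ne_zero _ (neg_ne_zero.2 one_ne_zero))
    (superPairing_self_ne_zero hg.2 (mt (eq_zero_of_superAct_eq_zero hf.1.1 hf.2) hf0))

theorem exists_superPairing_superMul_left_ne_zero {g : Superspace n} (hΔx : Δ ∈ xHomogSub n s)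
    (hΔθ : Δ ∈ thetaHomogSub n r) (hj : j ≤ r) (hg : g ∈ derivClosureComp Δ i j) (hg0 : g ≠ 0) :
    ∃ f ∈ derivClosureComp Δ (s - i) (r - j), superPairing (superMul f g) Δ ≠ 0 := by
  have hf := superAct_mem_derivClosureComp hΔx hΔθ hj hg
  refine ⟨superAct g Δ, hf, ?_⟩
  rw [superPairing, superAct_superMul]
  exact superPairing_self_ne_zero hf.2 (mt (eq_zero_of_superAct_eq_zero hg.1.1 hg.2) hg0)

theorem rank_derivClosureComp_le (hΔx : Δ ∈ xHomogSub n s) (hΔθ : Δ ∈ thetaHomogSub n r)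
    (i : ℕ) (hj : j ≤ r) :
    Module.rank ℚ (derivClosureComp Δ i j) ≤
      Module.rank ℚ (derivClosureComp Δ (s - i) (r - j)) := by
  let φ : derivClosureComp Δ i j →ₗ[ℚ] derivClosureComp Δ (s - i) (r - j) :=
    ((superActBilin n).flip Δ).restrict fun _ => superAct_mem_derivClosureComp hΔx hΔθ hj
  refine LinearMap.rank_le_of_injective φ ((injective_iff_map_eq_zero φ).2 fun f hf => ?_)
  exact Subtype.ext (eq_zero_of_superAct_eq_zero f.2.1.1 f.2.2 (congrArg Subtype.val hf))

theorem rank_derivClosureComp_eq (hΔx : Δ ∈ xHomogSub n s) (hΔθ : Δ ∈ thetaHomogSub n r)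
    (hi : i ≤ s) (hj : j ≤ r) :
    Module.rank ℚ (derivClosureComp Δ i j) =
      Module.rank ℚ (derivClosureComp Δ (s - i) (r - j)) := by
  refine (rank_derivClosureComp_le hΔx hΔθ i hj).antisymm ?_
  have h := rank_derivClosureComp_le hΔx hΔθ (s - i) (Nat.sub_le r j)
  rwa [Nat.sub_sub_self hi, Nat.sub_sub_self hj] at h

theorem xHomogSub_zero_inf_thetaHomogSub_zero_le :
    xHomogSub n 0 ⊓ thetaHomogSub n 0 ≤ Submodule.span ℚ {sMono 0 ∅} := by
  rintro F ⟨hx, hθ⟩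
  refine Submodule.mem_span_singleton.2 ⟨constantCoeff (F ∅), funext fun S => ?_⟩
  rw [Pi.smul_apply, sMono]
  split_ifs with hS
  · have hconst : F S = C (constantCoeff (F S)) :=
      totalDegree_eq_zero_iff_eq_C.1 ((totalDegree_zero_iff_isHomogeneous _).2 (hx S trivial))
    rw [hconst, hS, monomial_zero', C_1, smul_eq_C_mul, mul_one]
  · rw [smul_zero, hθ S (mt Finset.card_eq_zero.1 hS)]

theorem rank_derivClosureComp_top (hΔx : Δ ∈ xHomogSub n s) (hΔθ : Δ ∈ thetaHomogSub n r)
    (hΔ0 : Δ ≠ 0) : Module.rank ℚ (derivClosureComp Δ s r) = 1 := by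
  refine le_antisymm ?_ ?_
  · calc Module.rank ℚ (derivClosureComp Δ s r)
        ≤ Module.rank ℚ (derivClosureComp Δ (s - s) (r - r)) :=
          rank_derivClosureComp_le hΔx hΔθ s le_rfl
      _ ≤ Module.rank ℚ (Submodule.span ℚ {(sMono 0 ∅ : Superspace n)}) := by
          rw [Nat.sub_self, Nat.sub_self]
          exact Submodule.rank_mono ((inf_le_inf_right _ inf_le_right).trans
            xHomogSub_zero_inf_thetaHomogSub_zero_le)
      _ ≤ 1 := (rank_submodule_le_one_iff' _).2 ⟨_, le_rfl⟩
  · rw [Cardinal.one_le_iff_ne_zero, ← pos_iff_ne_zero, rank_pos_iff_exists_ne_zero]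
    exact ⟨⟨Δ, ⟨self_mem_derivClosure Δ, hΔx⟩, hΔθ⟩, Subtype.coe_ne_coe.1 hΔ0⟩

theorem Wcomp_poincare_duality_general (hΔx : Δ ∈ xHomogSub n s) (hΔθ : Δ ∈ thetaHomogSub n r)
    (hΔ0 : Δ ≠ 0) (hi : i ≤ s) (hj : j ≤ r) :
    (∀ f ∈ derivClosureComp Δ i j, f ≠ 0 →
      ∃ g ∈ derivClosureComp Δ (s - i) (r - j), superPairing (superMul f g) Δ ≠ 0) ∧
    (∀ g ∈ derivClosureComp Δ (s - i) (r - j), g ≠ 0 →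
      ∃ f ∈ derivClosureComp Δ i j, superPairing (superMul f g) Δ ≠ 0) ∧
    Module.rank ℚ (derivClosureComp Δ i j) =
      Module.rank ℚ (derivClosureComp Δ (s - i) (r - j)) ∧
    Module.rank ℚ (derivClosureComp Δ s r) = 1 := by
  refine ⟨fun f => exists_superPairing_superMul_right_ne_zero hΔx hΔθ hj, fun g hg hg0 => ?_,
    rank_derivClosureComp_eq hΔx hΔθ hi hj, rank_derivClosureComp_top hΔx hΔθ hΔ0⟩
  simpa only [Nat.sub_sub_self hi, Nat.sub_sub_self hj] using
    exists_superPairing_superMul_left_ne_zero hΔx hΔθ (Nat.sub_le r j) hg hg0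

end DerivClosure

section Alternation

/-- The inversions of a permutation within a set of positions. -/
def inversions {α : Type*} [LinearOrder α] (w : Equiv.Perm α) (S : Finset α) : Finset (α × α) :=
  (S ×ˢ S).filter fun p => p.1 < p.2 ∧ w p.2 < w p.1

theorem mem_inversions {α : Type*} [LinearOrder α] {w : Equiv.Perm α} {S : Finset α} {i j : α} :
    (i, j) ∈ inversions w S ↔ (i ∈ S ∧ j ∈ S) ∧ i < j ∧ w j < w i := by
  rw [inversions, Finset.mem_filter, Finset.mem_product]

theorem inversions_univ_eq_of_forall_notMem_fixed {α : Type*} [LinearOrder α] [Fintype α]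
    {w : Equiv.Perm α} {S : Finset α} (hS : IsLowerSet (S : Set α)) (hw : ∀ i ∉ S, w i = i) :
    inversions w Finset.univ = inversions w S := by
  ext ⟨i, j⟩
  simp only [mem_inversions, Finset.mem_univ, true_and, iff_and_self]
  rintro ⟨hij, hwij⟩
  have hj : j ∈ S := by
    by_contra hj
    rw [hw j hj] at hwij
    have hwi : w i ∉ S := fun h => hj (hS hwij.le h)
    exact hij.not_gt (w.injective (hw (w i) hwi) ▸ hwij)
  exact ⟨hS hij.le hj, hj⟩

variable {n : ℕ} {w : Equiv.Perm (Fin n)} {e : Fin n →₀ ℕ} {T : Finset (Fin n)}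

theorem sign_eq_neg_one_pow_card_inversions (w : Equiv.Perm (Fin n)) :
    Equiv.Perm.sign w = (-1) ^ (inversions w Finset.univ).card := by
  have hw (i : Fin n) : ∏ j ∈ Finset.Ioi i, (if w i < w j then (1 : ℤˣ) else -1) =
      ∏ j, if i < j ∧ w j < w i then -1 else 1 := by
    rw [← Finset.filter_lt_eq_Ioi, Finset.prod_filter]
    refine Finset.prod_congr rfl fun j _ => ?_
    by_cases hij : i < j
    · simp only [hij, if_true, true_and, ← not_le, ite_not, (w.injective.ne hij.ne).le_iff_lt]
    · simp only [hij, if_false, false_and]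
  rw [Equiv.Perm.sign_eq_prod_prod_Ioi, Finset.prod_congr rfl fun i _ => hw i,
    ← Finset.prod_product', Finset.prod_ite, Finset.prod_const_one, mul_one, Finset.prod_const,
    inversions]

theorem permAct_sMono (w : Equiv.Perm (Fin n)) (e : Fin n →₀ ℕ) (T : Finset (Fin n)) :
    permAct w (sMono e T) =
      (-1 : ℚ) ^ (inversions w T).card • sMono (e.mapDomain w) (T.image w) := by
  have hiff (S : Finset (Fin n)) : S.image w.symm = T ↔ S = T.image w := by
    constructor <;> rintro rfl <;> simp [Finset.image_image]
  funext S
  simp only [permAct, sMono, Pi.smul_apply, ← hiff]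
  split_ifs with h
  · rw [h, rename_monomial, inversions]
  · rw [map_zero, smul_zero, smul_zero]

theorem permAct_sMono_mem_thetaHomogSub (w : Equiv.Perm (Fin n)) (e : Fin n →₀ ℕ)
    (T : Finset (Fin n)) : permAct w (sMono e T) ∈ thetaHomogSub n T.card := by
  rw [permAct_sMono, ← Finset.card_image_of_injective T w.injective]
  exact Submodule.smul_mem _ _ (sMono_mem_thetaHomogSub _ _)

theorem permAct_sMono_mem_xHomogSub (w : Equiv.Perm (Fin n)) (e : Fin n →₀ ℕ)
    (T : Finset (Fin n)) : permAct w (sMono e T) ∈ xHomogSub n e.degree := by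
  rw [permAct_sMono, ← Finsupp.degree_mapDomain w]
  exact Submodule.smul_mem _ _ (sMono_mem_xHomogSub _ _)

theorem sign_mul_neg_one_pow_card_inversions (hT : IsLowerSet (T : Set (Fin n)))
    (hw : ∀ i ∉ T, w i = i) :
    ((Equiv.Perm.sign w : ℤ) : ℚ) * (-1) ^ (inversions w T).card = 1 := by
  rw [sign_eq_neg_one_pow_card_inversions, inversions_univ_eq_of_forall_notMem_fixed hT hw]
  push_cast
  rw [← mul_pow, neg_one_mul, neg_neg, one_pow]

theorem apply_eq_self_of_stabilizes (he : Set.InjOn e (T : Set (Fin n))ᶜ) (hT : T.image w = T)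
    (hwe : e.mapDomain w = e) {i : Fin n} (hi : i ∉ T) : w i = i := by
  have hwi : w i ∉ T := by
    rwa [← hT, w.injective.mem_finset_image]
  refine he hwi hi ?_
  conv_lhs => rw [← hwe]
  exact Finsupp.mapDomain_apply w.injective e i

theorem sum_sign_smul_permAct_sMono_ne_zero (hT : IsLowerSet (T : Set (Fin n)))
    (he : Set.InjOn e (T : Set (Fin n))ᶜ) :
    ∑ w : Equiv.Perm (Fin n), ((Equiv.Perm.sign w : ℤ) : ℚ) • permAct w (sMono e T) ≠ 0 := by
  have hcoeff (w : Equiv.Perm (Fin n)) :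
      ((Equiv.Perm.sign w : ℤ) : ℚ) * coeff e (permAct w (sMono e T) T) =
        if T.image w = T ∧ e.mapDomain w = e then 1 else 0 := by
    rw [permAct_sMono, Pi.smul_apply, coeff_smul, sMono, smul_eq_mul, ← mul_assoc]
    by_cases hwT : T.image w = T
    · rw [if_pos hwT.symm, coeff_monomial]
      by_cases hwe : e.mapDomain w = e
      · rw [if_pos hwe, if_pos ⟨hwT, hwe⟩, mul_one, sign_mul_neg_one_pow_card_inversions hT
          fun _ => apply_eq_self_of_stabilizes he hwT hwe]
      · rw [if_neg hwe, if_neg fun h => hwe h.2, mul_zero]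
    · rw [if_neg fun h => hwT h.symm, if_neg fun h => hwT h.1, coeff_zero, mul_zero]
  have hpos : 0 < coeff e ((∑ w : Equiv.Perm (Fin n),
      ((Equiv.Perm.sign w : ℤ) : ℚ) • permAct w (sMono e T)) T) := by
    simp only [Finset.sum_apply, Pi.smul_apply, coeff_sum, coeff_smul, smul_eq_mul, hcoeff]
    refine Finset.sum_pos' (fun w _ => ite_nonneg zero_le_one le_rfl) ⟨1, Finset.mem_univ _, ?_⟩
    rw [if_pos ⟨Finset.image_id, Finsupp.mapDomain_id⟩]
    exact zero_lt_one
  intro h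
  rw [h, Pi.zero_apply, coeff_zero] at hpos
  exact lt_irrefl 0 hpos

end Alternation

section Vandermonde

/-- The exponents `(a_1, …, a_r, k - 1, …, 1, 0)` of the supermonomial defining `Δ_n(a)`. -/
noncomputable def vandermondeExponent (n r : ℕ) (a : Fin r → ℕ) : Fin n →₀ ℕ :=
  Finsupp.equivFunOnFinite.symm fun i => if h : (i : ℕ) < r then a ⟨i, h⟩ else n - 1 - i

/-- The positions of `θ_1, …, θ_r`, the `θ`-variables of the supermonomial defining `Δ_n(a)`. -/
def vandermondeThetaSupport (n r : ℕ) : Finset (Fin n) :=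
  Finset.univ.filter fun i => (i : ℕ) < r

variable {n r : ℕ}

theorem mem_vandermondeThetaSupport {i : Fin n} :
    i ∈ vandermondeThetaSupport n r ↔ (i : ℕ) < r :=
  Finset.mem_filter_univ i

theorem card_vandermondeThetaSupport (hrn : r ≤ n) : (vandermondeThetaSupport n r).card = r := by
  rw [vandermondeThetaSupport, Fin.card_filter_val_lt, min_eq_right hrn]

theorem degree_vandermondeExponent (hrn : r ≤ n) (a : Fin r → ℕ) :
    (vandermondeExponent n r a).degree = (∑ t, a t) + (n - r).choose 2 := by
  obtain ⟨k, rfl⟩ := Nat.exists_eq_add_of_le hrn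
  have hleft (t : Fin r) : vandermondeExponent (r + k) r a (Fin.castAdd k t) = a t :=
    dif_pos t.isLt
  have hright (t : Fin k) : vandermondeExponent (r + k) r a (Fin.natAdd r t) = k - 1 - t := by
    refine (dif_neg (Nat.not_lt.2 (Nat.le_add_right r t))).trans ?_
    rw [Fin.val_natAdd]
    lia
  rw [Finsupp.degree_eq_sum, Fin.sum_univ_add, Finset.sum_congr rfl fun t _ => hleft t,
    Finset.sum_congr rfl fun t _ => hright t, Nat.add_sub_cancel_left, Nat.choose_two_right,
    ← Finset.sum_range_id, ← Finset.sum_range_reflect (fun t => t) k, Finset.sum_range]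

theorem isLowerSet_vandermondeThetaSupport :
    IsLowerSet (vandermondeThetaSupport n r : Set (Fin n)) := fun _ _ hji hi =>
  mem_vandermondeThetaSupport.2 (lt_of_le_of_lt hji (mem_vandermondeThetaSupport.1 hi))

theorem injOn_vandermondeExponent (a : Fin r → ℕ) :
    Set.InjOn (vandermondeExponent n r a) (vandermondeThetaSupport n r : Set (Fin n))ᶜ := by
  have hval {i : Fin n} (hi : i ∈ (vandermondeThetaSupport n r : Set (Fin n))ᶜ) :
      vandermondeExponent n r a i = n - 1 - i :=
    dif_neg (mt mem_vandermondeThetaSupport.2 hi)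
  intro i hi j hj hij
  rw [hval hi, hval hj] at hij
  exact Fin.ext (by lia)

theorem superVandermonde_mem_thetaHomogSub (hrn : r ≤ n) (a : Fin r → ℕ) :
    superVandermonde n r a ∈ thetaHomogSub n r := by
  have h (w : Equiv.Perm (Fin n)) := permAct_sMono_mem_thetaHomogSub w
    (vandermondeExponent n r a) (vandermondeThetaSupport n r)
  rw [card_vandermondeThetaSupport hrn] at h
  exact Submodule.sum_mem _ fun w _ => Submodule.smul_mem _ _ (h w)

theorem superVandermonde_mem_xHomogSub (hrn : r ≤ n) (a : Fin r → ℕ) :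
    superVandermonde n r a ∈ xHomogSub n ((∑ t, a t) + (n - r).choose 2) := by
  rw [← degree_vandermondeExponent hrn]
  exact Submodule.sum_mem _ fun w _ =>
    Submodule.smul_mem _ _ (permAct_sMono_mem_xHomogSub w _ _)

theorem superVandermonde_ne_zero (n r : ℕ) (a : Fin r → ℕ) : superVandermonde n r a ≠ 0 :=
  sum_sign_smul_permAct_sMono_ne_zero isLowerSet_vandermondeThetaSupport
    (injOn_vandermondeExponent a)

end Vandermonde

/-- Corollary 5.8: with `s = a_1 + ⋯ + a_r + C(k,2)`, `k = n - r`,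
for `0 ≤ i ≤ s` and `0 ≤ j ≤ r` the pairing `W_n(a)_{i,j} × W_n(a)_{s-i,r-j} → ℚ`,
`(f,g) ↦ ∂(fg)(Δ_n(a))`, is perfect (nondegenerate on each side); in particular
`dim W_n(a)_{i,j} = dim W_n(a)_{s-i,r-j}` and the top component `W_n(a)_{s,r}` is
one-dimensional. -/
theorem Wcomp_poincare_duality (n r : ℕ) (hrn : r ≤ n) (a : Fin r → ℕ) (i j : ℕ)
    (hi : i ≤ (∑ t : Fin r, a t) + Nat.choose (n - r) 2) (hj : j ≤ r) :
    (∀ f ∈ Wcomp n r a i j, f ≠ 0 →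
      ∃ g ∈ Wcomp n r a ((∑ t : Fin r, a t) + Nat.choose (n - r) 2 - i) (r - j),
        dualityPairing n r a f g ≠ 0) ∧
    (∀ g ∈ Wcomp n r a ((∑ t : Fin r, a t) + Nat.choose (n - r) 2 - i) (r - j), g ≠ 0 →
      ∃ f ∈ Wcomp n r a i j, dualityPairing n r a f g ≠ 0) ∧
    Module.rank ℚ (↥(Wcomp n r a i j)) =
      Module.rank ℚ
        (↥(Wcomp n r a ((∑ t : Fin r, a t) + Nat.choose (n - r) 2 - i) (r - j))) ∧
    Module.rank ℚ (↥(Wcomp n r a ((∑ t : Fin r, a t) + Nat.choose (n - r) 2) r)) = 1 :=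
  Wcomp_poincare_duality_general (superVandermonde_mem_xHomogSub hrn a)
    (superVandermonde_mem_thetaHomogSub hrn a) (superVandermonde_ne_zero n r a) hi hj
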